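/- Assume g_i^{jk} ∈ ℝ for 0 ≤ i,j,k ≤ 2 with g_i^{jk} = g_i^{kj}, and Σ_{i,j,k=0}^2 g_i^{jk} p_i p_j p_k = 0 for every p = (p₀,p₁,p₂) ∈ ℝ³ satisfying p₀² = p₁² + p₂². Then there exists a constant C > 0 (depending only on the g_i^{jk}) such that for all T > 0, all f, g ∈ C^∞([0,T]×ℝ²), and all (t,x) ∈ [0,T]×ℝ² with x ≠ 0: |Σ_{i,j,k=0}^2 g_i^{jk}(∂_i f ∂²_{jk} g)(t,x)| ≤ C(|Zf(t,x)||∂²g(t,x)| + |∂f(t,x)||Z∂g(t,x)|). -/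

import Mathlib

/-!
Write `ω = x / |x|` and let `q = (1, -ω₁, -ω₂)`, a null covector with entries of size at most `1`.
The definition of `Z` gives `∂_i f = Z_i f + q_i ∂_t f` (with `Z₀ = 0`), and, since partial
derivatives commute,
`∂_j ∂_k h = Z_j ∂_k h + q_j ∂_k ∂_t h = (Z_j ∂_k h + q_j Z_k ∂_t h) + q_j q_k ∂_t² h`.
Inserting both in the cubic form, every term contains a factor `Zf` or `Z∂h`, except
`∂_t f ∂_t² h Σ g_i^{jk} q_i q_j q_k`, which vanishes by the null condition.
-/

noncomputable section

open Real MeasureTheory Set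

/-- A function of time `t` and space `(x, y)`. -/
abbrev F3 : Type := ℝ → ℝ → ℝ → ℝ

/-- Partial derivative in time. -/
def pt (f : F3) : F3 := fun t x y => deriv (fun s => f s x y) t
/-- Partial derivative in the first space variable. -/
def px (f : F3) : F3 := fun t x y => deriv (fun s => f t s y) x
/-- Partial derivative in the second space variable. -/
def py (f : F3) : F3 := fun t x y => deriv (fun s => f t x s) y

/-- `∂ = (∂_t, ∂_1, ∂_2)`. -/
def pdi : Fin 3 → F3 → F3 := ![pt, px, py]

/-- The scaling field `X = t∂_t + x₁∂₁ + x₂∂₂`. -/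
def Xf (f : F3) : F3 := fun t x y => t * pt f t x y + x * px f t x y + y * py f t x y
/-- The rotation field `Ω = x₁∂₂ − x₂∂₁`. -/
def Om (f : F3) : F3 := fun t x y => x * py f t x y - y * px f t x y
/-- The Lorentz boost `L₁ = t∂₁ + x₁∂_t`. -/
def L1f (f : F3) : F3 := fun t x y => t * px f t x y + x * pt f t x y
/-- The Lorentz boost `L₂ = t∂₂ + x₂∂_t`. -/
def L2f (f : F3) : F3 := fun t x y => t * py f t x y + y * pt f t x y

/-- The family `Γ = (∂_t, ∂_1, ∂_2, X)`. -/
def GammaF : Fin 4 → F3 → F3 := ![pt, px, py, Xf]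

/-- Iterated composition `Γ^α` over a word `α`. -/
def GIter : List (Fin 4) → F3 → F3
  | [], f => f
  | a :: l, f => GammaF a (GIter l f)

/-- The family `Λ = (∂_t, ∂_1, ∂_2, Ω, X, L₁, L₂)`. -/
def LamF : Fin 7 → F3 → F3 := ![pt, px, py, Om, Xf, L1f, L2f]

/-- Iterated composition `Λ^α` over a word `α`. -/
def LIter : List (Fin 7) → F3 → F3
  | [], f => f
  | a :: l, f => LamF a (LIter l f)

/-- Iterated composition `∂^β` over a word `β`. -/
def PIter : List (Fin 3) → F3 → F3
  | [], f => f
  | a :: l, f => pdi a (PIter l f)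

/-- `r = |x|`. -/
def rad (x y : ℝ) : ℝ := Real.sqrt (x ^ 2 + y ^ 2)
/-- `σ₋(t,x) = 1 + |t − |x||`. -/
def sm (t x y : ℝ) : ℝ := 1 + |t - rad x y|
/-- `σ₊(t,x) = 1 + t + |x|`. -/
def sp (t x y : ℝ) : ℝ := 1 + t + rad x y

/-- `f` is a `C^∞` function of `(t, x)`. -/
def Smooth3 (f : F3) : Prop := ContDiff ℝ (⊤ : ℕ∞) (fun p : ℝ × ℝ × ℝ => f p.1 p.2.1 p.2.2)

/-- `Z₁ = ∂₁ + (x₁/|x|)∂_t`. -/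
def Z1 (f : F3) : F3 := fun t x y => px f t x y + (x / rad x y) * pt f t x y
/-- `Z₂ = ∂₂ + (x₂/|x|)∂_t`. -/
def Z2 (f : F3) : F3 := fun t x y => py f t x y + (y / rad x y) * pt f t x y
/-- The family `Z = (Z₁, Z₂)`. -/
def Zi : Fin 2 → F3 → F3 := ![Z1, Z2]

/-- `f` is radially symmetric in the space variables. -/
def RadialF (f : F3) : Prop := ∀ t x y x' y', rad x y = rad x' y' → f t x y = f t x' y'

section CubicForm

variable {ι : Type*} [Fintype ι]

lemma cubic_sum_eq_of_null {R : Type*} [CommRing R] {g : ι → ι → ι → R}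
    {q a z : ι → R} {B V : ι → ι → R} {α β : R}
    (hg : ∑ i, ∑ j, ∑ k, g i j k * q i * q j * q k = 0)
    (ha : ∀ i, a i = z i + q i * α) (hB : ∀ j k, B j k = V j k + q j * q k * β) :
    ∑ i, ∑ j, ∑ k, g i j k * a i * B j k =
      ∑ i, ∑ j, ∑ k, g i j k * (z i * B j k + q i * α * V j k) := by
  have hterm (i j k : ι) : g i j k * a i * B j k =
      g i j k * (z i * B j k + q i * α * V j k) + α * β * (g i j k * q i * q j * q k) := by
    rw [ha, hB]; ring
  simp only [hterm, Finset.sum_add_distrib, ← Finset.mul_sum, hg, mul_zero, add_zero]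

lemma abs_sum_mul_le_sum_abs_mul (c u : ι → ℝ) {M : ℝ} (hu : ∀ i, |u i| ≤ M) :
    |∑ i, c i * u i| ≤ (∑ i, |c i|) * M := by
  rw [Finset.sum_mul]
  refine (Finset.abs_sum_le_sum_abs _ _).trans (Finset.sum_le_sum fun i _ => ?_)
  rw [abs_mul]
  exact mul_le_mul_of_nonneg_left (hu i) (abs_nonneg _)

lemma abs_sum_sum_sum_mul_le (c u : ι → ι → ι → ℝ) {M : ℝ} (hu : ∀ i j k, |u i j k| ≤ M) :
    |∑ i, ∑ j, ∑ k, c i j k * u i j k| ≤ (∑ i, ∑ j, ∑ k, |c i j k|) * M := by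
  simpa only [Fintype.sum_prod_type] using
    abs_sum_mul_le_sum_abs_mul (fun p : ι × ι × ι => c p.1 p.2.1 p.2.2)
      (fun p => u p.1 p.2.1 p.2.2) fun p => hu p.1 p.2.1 p.2.2

lemma abs_cubic_sum_le_of_null {g : ι → ι → ι → ℝ} {q a z : ι → ℝ}
    {B V : ι → ι → ℝ} {α β Z D A W : ℝ}
    (hg : ∑ i, ∑ j, ∑ k, g i j k * q i * q j * q k = 0) (hq : ∀ i, |q i| ≤ 1)
    (ha : ∀ i, a i = z i + q i * α) (hB : ∀ j k, B j k = V j k + q j * q k * β)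
    (hz : ∀ i, |z i| ≤ Z) (hD : ∀ j k, |B j k| ≤ D) (hα : |α| ≤ A) (hV : ∀ j k, |V j k| ≤ W) :
    |∑ i, ∑ j, ∑ k, g i j k * a i * B j k| ≤
      (∑ i, ∑ j, ∑ k, |g i j k|) * (Z * D + A * W) := by
  rw [cubic_sum_eq_of_null hg ha hB]
  refine abs_sum_sum_sum_mul_le _ _ fun i j k => ?_
  have hqα : |q i * α| ≤ A := by
    rw [abs_mul]
    exact (mul_le_of_le_one_left (abs_nonneg α) (hq i)).trans hα
  calc |z i * B j k + q i * α * V j k|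
      ≤ |z i| * |B j k| + |q i * α| * |V j k| := by
        simpa only [abs_mul] using abs_add_le (z i * B j k) (q i * α * V j k)
    _ ≤ Z * D + A * W :=
        add_le_add (mul_le_mul (hz i) (hD j k) (abs_nonneg _) ((abs_nonneg _).trans (hz i)))
          (mul_le_mul hqα (hV j k) (abs_nonneg _) ((abs_nonneg _).trans hα))

end CubicForm

section PartialDerivatives

/-- The standard basis of spacetime, ordered so that `pdi i` is the derivative along
`spacetimeBasis i`. -/
def spacetimeBasis : Fin 3 → ℝ × ℝ × ℝ := ![(1, 0, 0), (0, 1, 0), (0, 0, 1)]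

variable {f : F3} {t x y : ℝ}

lemma pdi_eq_fderiv (hf : DifferentiableAt ℝ ↿f (t, x, y)) (i : Fin 3) :
    pdi i f t x y = fderiv ℝ ↿f (t, x, y) (spacetimeBasis i) := by
  fin_cases i
  · have hline : HasDerivAt (fun s : ℝ => (s, x, y)) (1, 0, 0) t :=
      (hasDerivAt_id t).prodMk (hasDerivAt_const t (x, y))
    exact (hf.hasFDerivAt.comp_hasDerivAt t hline).deriv
  · have hline : HasDerivAt (fun s : ℝ => (t, s, y)) (0, 1, 0) x :=
      (hasDerivAt_const x t).prodMk ((hasDerivAt_id x).prodMk (hasDerivAt_const x y))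
    exact (hf.hasFDerivAt.comp_hasDerivAt x hline).deriv
  · have hline : HasDerivAt (fun s : ℝ => (t, x, s)) (0, 0, 1) y :=
      (hasDerivAt_const y t).prodMk ((hasDerivAt_const y x).prodMk (hasDerivAt_id y))
    exact (hf.hasFDerivAt.comp_hasDerivAt y hline).deriv

lemma pdi_pdi_eq_fderiv_fderiv (hf : ContDiffAt ℝ 2 ↿f (t, x, y)) (i j : Fin 3) :
    pdi i (pdi j f) t x y =
      fderiv ℝ (fderiv ℝ ↿f) (t, x, y) (spacetimeBasis i) (spacetimeBasis j) := by
  have hfirst : ↿(pdi j f) =ᶠ[nhds (t, x, y)] fun p => fderiv ℝ ↿f p (spacetimeBasis j) := by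
    filter_upwards [hf.eventually (by simp)] with p hp
    exact pdi_eq_fderiv (hp.differentiableAt two_ne_zero) j
  have hfderiv : DifferentiableAt ℝ (fderiv ℝ ↿f) (t, x, y) :=
    (hf.fderiv_right (m := 1) (by norm_num)).differentiableAt one_ne_zero
  have hsecond := (hfderiv.hasFDerivAt.clm_apply
    (hasFDerivAt_const (spacetimeBasis j) (t, x, y))).congr_of_eventuallyEq hfirst
  rw [pdi_eq_fderiv hsecond.differentiableAt, hsecond.fderiv]
  simp

lemma pdi_comm (hf : ContDiffAt ℝ 2 ↿f (t, x, y)) (i j : Fin 3) :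
    pdi i (pdi j f) t x y = pdi j (pdi i f) t x y := by
  rw [pdi_pdi_eq_fderiv_fderiv hf, pdi_pdi_eq_fderiv_fderiv hf]
  exact hf.isSymmSndFDerivAt (by simp) _ _

end PartialDerivatives

section NullFrame

/-- The null covector `q = (1, -x₁/|x|, -x₂/|x|)`, the differential of `t - |x|`: modulo the fields
`Z`, every `∂_i` is `q_i ∂_t`. At `x = 0` division by zero makes it `(1, 0, 0)`, which is not
null. -/
def nullCovector (x y : ℝ) : Fin 3 → ℝ := ![1, -(x / rad x y), -(y / rad x y)]

/-- The family `(0, Z₁, Z₂)`: the fields `Z` extended by zero to the time index, so that they share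
their index set with `pdi`. -/
def ZExt : Fin 3 → F3 → F3 := ![0, Z1, Z2]

lemma nullCovector_sq {x y : ℝ} (hxy : (x, y) ≠ (0, 0)) :
    nullCovector x y 0 ^ 2 = nullCovector x y 1 ^ 2 + nullCovector x y 2 ^ 2 := by
  have hpos : 0 < x ^ 2 + y ^ 2 := by
    rcases not_and_or.mp (mt Prod.mk_inj.mpr hxy) with hx | hy <;> positivity
  have hrad : rad x y ^ 2 = x ^ 2 + y ^ 2 := Real.sq_sqrt hpos.le
  simp [nullCovector, div_pow, hrad, ← add_div, hpos.ne']

lemma abs_nullCovector_le_one (x y : ℝ) (i : Fin 3) : |nullCovector x y i| ≤ 1 := by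
  have hdiv {s : ℝ} (hs : s ^ 2 ≤ x ^ 2 + y ^ 2) : |s / rad x y| ≤ 1 := by
    have hrad : 0 ≤ rad x y := Real.sqrt_nonneg _
    rw [abs_div, abs_of_nonneg hrad]
    exact div_le_one_of_le₀ (Real.abs_le_sqrt hs) hrad
  fin_cases i
  · simp [nullCovector]
  · simpa [nullCovector] using hdiv (le_add_of_nonneg_right (sq_nonneg y))
  · simpa [nullCovector] using hdiv (le_add_of_nonneg_left (sq_nonneg x))

lemma pdi_eq_ZExt_add (f : F3) (t x y : ℝ) (i : Fin 3) :
    pdi i f t x y = ZExt i f t x y + nullCovector x y i * pdi 0 f t x y := by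
  fin_cases i <;> simp [pdi, ZExt, Z1, Z2, nullCovector]

lemma pdi_pdi_eq_ZExt_pdi_add {h : F3} {t x y : ℝ} (hh : ContDiffAt ℝ 2 ↿h (t, x, y))
    (j k : Fin 3) :
    pdi j (pdi k h) t x y =
      (ZExt j (pdi k h) t x y + nullCovector x y j * ZExt k (pdi 0 h) t x y) +
        nullCovector x y j * nullCovector x y k * pdi 0 (pdi 0 h) t x y := by
  rw [pdi_eq_ZExt_add, pdi_comm hh 0 k, pdi_eq_ZExt_add (pdi 0 h) t x y k]
  ring

lemma abs_ZExt_le {f : F3} {t x y M : ℝ} (hM : ∀ i, |Zi i f t x y| ≤ M) (i : Fin 3) :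
    |ZExt i f t x y| ≤ M := by
  fin_cases i
  · simpa [ZExt] using (abs_nonneg _).trans (hM 0)
  · exact hM 0
  · exact hM 1

lemma abs_ZExt_pdi_add_le {h : F3} {t x y M : ℝ}
    (hM : ∀ i k, |Zi i (pdi k h) t x y| ≤ M) (j k : Fin 3) :
    |ZExt j (pdi k h) t x y + nullCovector x y j * ZExt k (pdi 0 h) t x y| ≤ 2 * M := by
  have hfirst : |ZExt j (pdi k h) t x y| ≤ M := abs_ZExt_le (fun i => hM i k) j
  have hsecond : |nullCovector x y j * ZExt k (pdi 0 h) t x y| ≤ M := by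
    rw [abs_mul]
    exact (mul_le_of_le_one_left (abs_nonneg _) (abs_nullCovector_le_one x y j)).trans
      (abs_ZExt_le (fun i => hM i 0) k)
  linarith [abs_add_le (ZExt j (pdi k h) t x y) (nullCovector x y j * ZExt k (pdi 0 h) t x y)]

end NullFrame

lemma abs_le_iSup_abs {ι : Type*} [Finite ι] (u : ι → ℝ) (i : ι) : |u i| ≤ ⨆ i, |u i| :=
  le_ciSup (f := fun i => |u i|) (Set.finite_range _).bddAbove i

theorem null_form_estimate_cubic_general (g : Fin 3 → Fin 3 → Fin 3 → ℝ)
    (hnull : ∀ p : Fin 3 → ℝ, (p 0) ^ 2 = (p 1) ^ 2 + (p 2) ^ 2 →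
      ∑ i, ∑ j, ∑ k, g i j k * p i * p j * p k = 0) :
    ∃ C > 0, ∀ (f h : F3) (t x y : ℝ), DifferentiableAt ℝ ↿f (t, x, y) →
      ContDiffAt ℝ 2 ↿h (t, x, y) → (x, y) ≠ ((0 : ℝ), (0 : ℝ)) →
        |∑ i, ∑ j, ∑ k, g i j k * pdi i f t x y * pdi j (pdi k h) t x y| ≤
          C * ((⨆ i : Fin 2, |Zi i f t x y|) *
                (⨆ p : Fin 3 × Fin 3, |pdi p.1 (pdi p.2 h) t x y|)
            + (⨆ i : Fin 3, |pdi i f t x y|) *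
                (⨆ p : Fin 2 × Fin 3, |Zi p.1 (pdi p.2 h) t x y|)) := by
  refine ⟨2 * (∑ i, ∑ j, ∑ k, |g i j k|) + 1, by positivity, fun f h t x y _ hh hxy => ?_⟩
  set Zf := ⨆ i : Fin 2, |Zi i f t x y|
  set ddh := ⨆ p : Fin 3 × Fin 3, |pdi p.1 (pdi p.2 h) t x y|
  set df := ⨆ i : Fin 3, |pdi i f t x y|
  set Zdh := ⨆ p : Fin 2 × Fin 3, |Zi p.1 (pdi p.2 h) t x y|
  have hZf : ∀ i, |ZExt i f t x y| ≤ Zf := abs_ZExt_le (abs_le_iSup_abs _)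
  have hddh (j k : Fin 3) : |pdi j (pdi k h) t x y| ≤ ddh :=
    abs_le_iSup_abs (fun p : Fin 3 × Fin 3 => pdi p.1 (pdi p.2 h) t x y) (j, k)
  have hdf : |pdi 0 f t x y| ≤ df := abs_le_iSup_abs (fun i => pdi i f t x y) 0
  have hZdh (i : Fin 2) (k : Fin 3) : |Zi i (pdi k h) t x y| ≤ Zdh :=
    abs_le_iSup_abs (fun p : Fin 2 × Fin 3 => Zi p.1 (pdi p.2 h) t x y) (i, k)
  have hbound := abs_cubic_sum_le_of_null (hnull _ (nullCovector_sq hxy))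
    (abs_nullCovector_le_one x y) (pdi_eq_ZExt_add f t x y) (pdi_pdi_eq_ZExt_pdi_add hh)
    hZf hddh hdf (abs_ZExt_pdi_add_le hZdh)
  have hZfddh : 0 ≤ Zf * ddh :=
    mul_nonneg ((abs_nonneg _).trans (hZf 0)) ((abs_nonneg _).trans (hddh 0 0))
  have hdfZdh : 0 ≤ df * Zdh :=
    mul_nonneg ((abs_nonneg _).trans hdf) ((abs_nonneg _).trans (hZdh 0 0))
  have hG : 0 ≤ ∑ i, ∑ j, ∑ k, |g i j k| := by positivity
  refine hbound.trans ?_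
  nlinarith [mul_nonneg hG hZfddh]

/-- **First null condition pointwise estimate** (Lemma 3.1, (3.3)): if the cubic form
`Σ g_i^{jk} p_i p_j p_k` vanishes on the null cone `p₀² = p₁² + p₂²`, then
`|Σ g_i^{jk} ∂_i f ∂²_{jk} g| ≤ C(|Zf||∂²g| + |∂f||Z∂g|)`. -/
theorem null_form_estimate_cubic (g : Fin 3 → Fin 3 → Fin 3 → ℝ)
    (hsym : ∀ i j k, g i j k = g i k j)
    (hnull : ∀ p : Fin 3 → ℝ, (p 0) ^ 2 = (p 1) ^ 2 + (p 2) ^ 2 →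
      ∑ i, ∑ j, ∑ k, g i j k * p i * p j * p k = 0) :
    ∃ C > 0, ∀ T : ℝ, 0 < T → ∀ f h : F3, Smooth3 f → Smooth3 h →
      ∀ t x y : ℝ, t ∈ Icc (0 : ℝ) T → (x, y) ≠ ((0 : ℝ), (0 : ℝ)) →
        |∑ i, ∑ j, ∑ k, g i j k * pdi i f t x y * pdi j (pdi k h) t x y| ≤
          C * ((⨆ i : Fin 2, |Zi i f t x y|) *
                (⨆ p : Fin 3 × Fin 3, |pdi p.1 (pdi p.2 h) t x y|)
            + (⨆ i : Fin 3, |pdi i f t x y|) *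
                (⨆ p : Fin 2 × Fin 3, |Zi p.1 (pdi p.2 h) t x y|)) := by
  obtain ⟨C, hC, hest⟩ := null_form_estimate_cubic_general g hnull
  exact ⟨C, hC, fun _ _ f h hf hh t x y _ hxy => hest f h t x y
    (hf.differentiable (by simp)).differentiableAt (hh.of_le (by norm_cast)).contDiffAt hxy⟩

end
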